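/- For smooth rapidly decaying divergence-free u : ℝ³ → ℝ³ and any multi-index α with |α| ≤ m, ∫_{ℝ³} (u · ∇ D^α u) · D^α u dx = 0; consequently the transport commutator estimate gives |∫ D^α(u·∇u) · D^α u dx| ≤ C ‖∇u‖_{L^∞} ‖∇u‖²_{H^{m−1}} after summing over 0 < |α| ≤ m. -/

import Mathlib

open MeasureTheory

/-- Partial derivative `∂ᵢ f` of a scalar function on `ℝ³`. -/
noncomputable def pd (i : Fin 3) (f : (Fin 3 → ℝ) → ℝ) : (Fin 3 → ℝ) → ℝ :=
  fun x => fderiv ℝ f x (Pi.single i 1)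

/-- Multi-index derivative `D^α` with `α = (a, b, c)`. -/
noncomputable def Dmulti (a b c : ℕ) (f : (Fin 3 → ℝ) → ℝ) : (Fin 3 → ℝ) → ℝ :=
  (pd 0)^[a] ((pd 1)^[b] ((pd 2)^[c] f))

/-- Squared Sobolev `H^m` norm. -/
noncomputable def sobSq (m : ℕ) (f : (Fin 3 → ℝ) → ℝ) : ℝ :=
  ∑ k ∈ Finset.range (m + 1), ∫ x : Fin 3 → ℝ, ‖iteratedFDeriv ℝ k f x‖ ^ 2

/-- `L^∞` norm of the gradient of a vector field. -/
noncomputable def gradLinfVec (u : (Fin 3 → ℝ) → (Fin 3 → ℝ)) : ℝ :=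
  (eLpNorm (fun x => ‖fderiv ℝ u x‖) ⊤ volume).toReal

/-- `H^{m-1}` norm of the gradient of a vector field (i.e. `‖∇u‖_{H^{m-1}}`). -/
noncomputable def gradSob (m : ℕ) (u : (Fin 3 → ℝ) → (Fin 3 → ℝ)) : ℝ :=
  Real.sqrt (∑ i : Fin 3, ∑ j : Fin 3, sobSq (m - 1) (pd j (fun y => u y i)))

/-- Multi-indices `α ∈ ℕ³` with `0 < |α| ≤ m`. -/
def idxSetPos (m : ℕ) : Finset (ℕ × ℕ × ℕ) :=
  (Finset.range (m + 1) ×ˢ Finset.range (m + 1) ×ˢ Finset.range (m + 1)).filter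
    (fun p => 0 < p.1 + p.2.1 + p.2.2 ∧ p.1 + p.2.1 + p.2.2 ≤ m)

/-!
Transport by a divergence-free field is skew-symmetric in `L²`, so the term `u · ∇ D^α u` pairs to
zero with `D^α u` and only the commutator `[D^α, u · ∇] u` contributes to `∫ D^α (u · ∇u) · D^α u`.
In the commutator at least one derivative falls on the transporting field, so it is a bilinear
expression in `F = ∇u` whose terms carry `n = |α| - 1` further derivatives.

Each term is estimated by Hölder with exponents `2n/k` and `2n/l`, where `k + l = n`. Integration by
parts shows that `j ↦ ‖∇ʲ F‖_{L^{2n/j}}` is log-convex up to a constant factor; comparing the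
values at `k` and `l` with those at the endpoints `0` and `n` bounds the commutator in `L²` by
`‖∇u‖_{L^∞} ‖∇u‖_{H^{m-1}}`.
-/

open scoped SchwartzMap LineDeriv ENNReal NNReal

section AlmostLogConvex

variable {R : Type*} [CommSemiring R] [LinearOrder R] [IsStrictOrderedRing R]
  {A : ℕ → R} {C : R} {n : ℕ}

theorem mul_succ_le_pow_mul_of_sq_le (hA : ∀ j, 0 ≤ A j) (hC : 0 ≤ C)
    (h : ∀ j, j + 2 ≤ n → A (j + 1) ^ 2 ≤ C * (A j * A (j + 2))) (j d : ℕ) (hn : j + d + 1 ≤ n) :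
    A (j + 1) * A (j + d) ≤ C ^ d * (A j * A (j + d + 1)) := by
  induction d with
  | zero => simp [mul_comm]
  | succ d ih =>
    have hsq := h (j + d) (by omega)
    have hright : 0 ≤ C ^ (d + 1) * (A j * A (j + d + 2)) := by
      have := hA j; have := hA (j + d + 2); positivity
    rcases (hA (j + d + 1)).eq_or_lt with hzero | hpos
    · simpa only [← add_assoc, ← hzero, mul_zero] using hright
    have hpos' : 0 < A (j + d) := by
      refine (hA _).lt_of_ne' fun hzero => (pow_pos hpos 2).not_ge ?_
      simpa [hzero] using hsq
    refine le_of_mul_le_mul_right ?_ (mul_pos hpos' hpos)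
    calc A (j + 1) * A (j + d + 1) * (A (j + d) * A (j + d + 1))
        = A (j + 1) * A (j + d) * A (j + d + 1) ^ 2 := by ring
      _ ≤ C ^ d * (A j * A (j + d + 1)) * (C * (A (j + d) * A (j + d + 2))) :=
          mul_le_mul (ih (by omega)) hsq (pow_nonneg (hA _) 2)
            (mul_nonneg (pow_nonneg hC d) (mul_nonneg (hA _) (hA _)))
      _ = C ^ (d + 1) * (A j * A (j + d + 2)) * (A (j + d) * A (j + d + 1)) := by ring

theorem mul_le_pow_mul_of_sq_le (hA : ∀ j, 0 ≤ A j) (hC : 0 ≤ C)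
    (h : ∀ j, j + 2 ≤ n → A (j + 1) ^ 2 ≤ C * (A j * A (j + 2))) {k l : ℕ} (hkl : k + l = n) :
    A k * A l ≤ C ^ (k * l) * (A 0 * A n) := by
  wlog hle : k ≤ l generalizing k l
  · rw [mul_comm (A k), mul_comm k]
    exact this (by omega) (by omega)
  induction k generalizing l with
  | zero => simp [← hkl]
  | succ k ih =>
    obtain ⟨d, rfl⟩ := Nat.exists_eq_add_of_le (Nat.le_of_succ_le hle)
    calc A (k + 1) * A (k + d) ≤ C ^ d * (A k * A (k + d + 1)) :=
          mul_succ_le_pow_mul_of_sq_le hA hC h k d (by omega)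
      _ ≤ C ^ d * (C ^ (k * (k + d + 1)) * (A 0 * A n)) :=
          mul_le_mul_of_nonneg_left (ih (by omega) (by omega)) (pow_nonneg hC d)
      _ = C ^ ((k + 1) * (k + d)) * (A 0 * A n) := by ring

end AlmostLogConvex

/-- The pointwise product of real-valued Schwartz functions. -/
noncomputable def schwartzMul {D : Type*} [NormedAddCommGroup D] [NormedSpace ℝ D]
    (f g : 𝓢(D, ℝ)) : 𝓢(D, ℝ) :=
  SchwartzMap.pairing (ContinuousLinearMap.mul ℝ ℝ) f g

local infix:70 "⊙" => schwartzMul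

section Product

variable {D E F G : Type*} [NormedAddCommGroup D] [NormedSpace ℝ D]
  [NormedAddCommGroup E] [NormedSpace ℝ E] [NormedAddCommGroup F] [NormedSpace ℝ F]
  [NormedAddCommGroup G] [NormedSpace ℝ G]

theorem lineDerivOp_comm (f : 𝓢(D, E)) (a b : D) : ∂_{a} (∂_{b} f) = ∂_{b} (∂_{a} f) := by
  have second_apply (c d x : D) : ∂_{c} (∂_{d} f) x = fderiv ℝ (fderiv ℝ f) x c d :=
    (SchwartzMap.iteratedLineDerivOp_eq_iteratedFDeriv (m := ![c, d])).trans
      (iteratedFDeriv_two_apply f x ![c, d])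
  ext x
  rw [second_apply, second_apply]
  exact (f.smooth 2).contDiffAt.isSymmSndFDerivAt (by simp) a b

theorem iteratedLineDerivOp_lineDerivOp_comm (f : 𝓢(D, E)) {n : ℕ} (m : Fin n → D) (a : D) :
    ∂^{m} (∂_{a} f) = ∂_{a} (∂^{m} f) := by
  induction n with
  | zero => rfl
  | succ n ih =>
    rw [LineDeriv.iteratedLineDerivOp_succ_left, ih, lineDerivOp_comm,
      ← LineDeriv.iteratedLineDerivOp_succ_left]

theorem lineDerivOp_pairing (B : E →L[ℝ] F →L[ℝ] G) (f : 𝓢(D, E)) (g : 𝓢(D, F)) (a : D) :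
    ∂_{a} (SchwartzMap.pairing B f g) =
      SchwartzMap.pairing B (∂_{a} f) g + SchwartzMap.pairing B f (∂_{a} g) := by
  ext x
  have hB : HasFDerivAt (SchwartzMap.pairing B f g) _ x :=
    B.hasFDerivAt_of_bilinear (f.hasFDerivAt x) (g.hasFDerivAt x)
  simp [SchwartzMap.lineDerivOp_apply_eq_fderiv, hB.fderiv, add_comm]

@[simp]
theorem schwartzMul_apply (f g : 𝓢(D, ℝ)) (x : D) : (f ⊙ g) x = f x * g x := rfl

theorem lineDerivOp_schwartzMul (f g : 𝓢(D, ℝ)) (a : D) :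
    ∂_{a} (f ⊙ g) = ∂_{a} f ⊙ g + f ⊙ ∂_{a} g :=
  lineDerivOp_pairing _ f g a

variable [MeasurableSpace D] [BorelSpace D] {μ : Measure D}

theorem eLpNorm_schwartzMul_le (f g : 𝓢(D, ℝ)) {p q r : ℝ≥0∞} [p.HolderTriple q r] :
    eLpNorm (f ⊙ g) r μ ≤ eLpNorm f p μ * eLpNorm g q μ :=
  have hmul : ⇑(f ⊙ g) = ⇑f • ⇑g := rfl
  hmul ▸ eLpNorm_smul_le_mul_eLpNorm g.continuous.aestronglyMeasurable
    f.continuous.aestronglyMeasurable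

theorem enorm_integral_schwartzMul_le (f g : 𝓢(D, ℝ)) :
    ‖∫ x, (f ⊙ g) x ∂μ‖ₑ ≤ eLpNorm f 2 μ * eLpNorm g 2 μ :=
  calc ‖∫ x, (f ⊙ g) x ∂μ‖ₑ ≤ ∫⁻ x, ‖(f ⊙ g) x‖ₑ ∂μ := enorm_integral_le_lintegral_enorm _
    _ = eLpNorm (f ⊙ g) 1 μ := eLpNorm_one_eq_lintegral_enorm.symm
    _ ≤ eLpNorm f 2 μ * eLpNorm g 2 μ := eLpNorm_schwartzMul_le f g

theorem integral_sum_mul_eq_sum_integral [SecondCountableTopology D] [μ.HasTemperateGrowth]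
    {ι : Type*} [Fintype ι] (f g : ι → 𝓢(D, ℝ)) :
    ∫ x, ∑ i, f i x * g i x ∂μ = ∑ i, ∫ x, f i x * g i x ∂μ :=
  integral_finsetSum _ fun i _ => (f i ⊙ g i).integrable

end Product

section GagliardoNirenberg

theorem hasDerivAt_abs_rpow_mul_self {r : ℝ} (hr : 0 < r) (t : ℝ) :
    HasDerivAt (fun s : ℝ => |s| ^ r * s) ((r + 1) * |t| ^ r) t := by
  rcases eq_or_ne t 0 with rfl | ht
  · have hlim := ((continuous_abs.rpow_const fun _ => Or.inr hr.le).tendsto (0 : ℝ)).mono_left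
      (nhdsWithin_le_nhds (s := {0}ᶜ))
    rw [hasDerivAt_iff_tendsto_slope, abs_zero, Real.zero_rpow hr.ne', mul_zero]
    rw [abs_zero, Real.zero_rpow hr.ne'] at hlim
    refine hlim.congr' ?_
    filter_upwards [self_mem_nhdsWithin] with s (hs : s ≠ 0)
    simp [slope_def_field, hs]
  · have hmul := ((hasDerivAt_abs ht).rpow_const (p := r) (Or.inl (abs_ne_zero.2 ht))).mul
      (hasDerivAt_id t)
    refine hmul.congr_deriv ?_
    calc SignType.sign t * r * |t| ^ (r - 1) * id t + |t| ^ r * 1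
        = r * (|t| ^ (r - 1) * (SignType.sign t * t)) + |t| ^ r := by simp only [id]; ring
      _ = (r + 1) * |t| ^ r := by
        rw [sign_mul_self, ← Real.rpow_add_one (abs_ne_zero.2 ht), sub_add_cancel]
        ring

theorem eLpNorm_abs_rpow_mul_le {α : Type*} [MeasurableSpace α] {μ : Measure α} {g k : α → ℝ}
    (hg : AEStronglyMeasurable g μ) (hk : AEStronglyMeasurable k μ) {r : ℝ} (hr : 0 < r) :
    eLpNorm (fun x => |g x| ^ r * k x) 1 μ ≤
      eLpNorm g (ENNReal.ofReal (r + 2)) μ ^ r * eLpNorm k (ENNReal.ofReal (r + 2) / 2) μ := by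
  have hdiv : ENNReal.ofReal (r + 2) / 2 = ENNReal.ofReal ((r + 2) / 2) := by
    rw [ENNReal.ofReal_div_of_pos two_pos, ENNReal.ofReal_ofNat]
  have : (ENNReal.ofReal ((r + 2) / r)).HolderTriple (ENNReal.ofReal (r + 2) / 2) 1 := by
    rw [hdiv]
    constructor
    rw [← ENNReal.ofReal_inv_of_pos (by positivity), ← ENNReal.ofReal_inv_of_pos (by positivity),
      ← ENNReal.ofReal_add (by positivity) (by positivity), inv_one, ← ENNReal.ofReal_one]
    congr 1
    field_simp
  have hpow : eLpNorm (fun x => |g x| ^ r) (ENNReal.ofReal ((r + 2) / r)) μ =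
      eLpNorm g (ENNReal.ofReal (r + 2)) μ ^ r := by
    simp_rw [← Real.norm_eq_abs]
    rw [eLpNorm_norm_rpow _ hr, ← ENNReal.ofReal_mul (by positivity), div_mul_cancel₀ _ hr.ne']
  have hmul : (fun x => |g x| ^ r * k x) = (fun x => |g x| ^ r) • k := rfl
  rw [← hpow, hmul]
  exact eLpNorm_smul_le_mul_eLpNorm hk
    ((continuous_abs.rpow_const fun _ => Or.inr hr.le).comp_aestronglyMeasurable hg)

variable {E : Type*} [NormedAddCommGroup E] [NormedSpace ℝ E] [FiniteDimensional ℝ E]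
  [MeasurableSpace E] [BorelSpace E] {μ : Measure E}

theorem integrable_abs_rpow_mul [μ.HasTemperateGrowth] (g h : 𝓢(E, ℝ)) {r : ℝ} (hr : 0 ≤ r) :
    Integrable (fun x => |g x| ^ r * h x) μ := by
  refine h.integrable.bdd_mul (c := SchwartzMap.seminorm ℝ 0 0 g ^ r)
    (g.continuous.abs.rpow_const fun _ => Or.inr hr).aestronglyMeasurable (.of_forall fun x => ?_)
  rw [Real.norm_of_nonneg (by positivity)]
  exact Real.rpow_le_rpow (abs_nonneg _) (g.norm_le_seminorm ℝ x) hr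

variable [μ.IsAddHaarMeasure]

theorem integral_abs_lineDeriv_rpow (f : 𝓢(E, ℝ)) (v : E) {r : ℝ} (hr : 0 < r) :
    ∫ x, |∂_{v} f x| ^ (r + 2) ∂μ =
      -(r + 1) * ∫ x, |∂_{v} f x| ^ r * (f ⊙ ∂_{v} (∂_{v} f)) x ∂μ := by
  set g := ∂_{v} f with hg
  have hderiv (x : E) :
      HasFDerivAt (fun x => |g x| ^ r * g x) (((r + 1) * |g x| ^ r) • fderiv ℝ g x) x :=
    (hasDerivAt_abs_rpow_mul_self hr (g x)).comp_hasFDerivAt x (g.hasFDerivAt x)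
  have hfderiv (x : E) :
      fderiv ℝ (fun x => |g x| ^ r * g x) x v * f x =
        (r + 1) * (|g x| ^ r * (f ⊙ ∂_{v} g) x) := by
    simp only [(hderiv x).fderiv, smul_apply, smul_eq_mul, schwartzMul_apply,
      SchwartzMap.lineDerivOp_apply_eq_fderiv v g x]
    ring
  have hparts := integral_mul_fderiv_eq_neg_fderiv_mul_of_integrable (μ := μ) (v := v)
    (f := fun x => |g x| ^ r * g x) (g := f)
    (by simpa only [hfderiv] using
      (integrable_abs_rpow_mul g (f ⊙ ∂_{v} g) hr.le).const_mul (r + 1))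
    (by simpa only [mul_assoc, ← SchwartzMap.lineDerivOp_apply_eq_fderiv] using!
      integrable_abs_rpow_mul g (g ⊙ g) hr.le)
    (by simpa only [mul_assoc] using! integrable_abs_rpow_mul g (g ⊙ f) hr.le)
    (fun x _ => (hderiv x).differentiableAt) (fun x _ => f.differentiableAt)
  calc ∫ x, |g x| ^ (r + 2) ∂μ = ∫ x, |g x| ^ r * g x * fderiv ℝ f x v ∂μ := by
        congr with x
        rw [Real.rpow_add' (abs_nonneg _) (by positivity), Real.rpow_two, sq_abs,
          ← SchwartzMap.lineDerivOp_apply_eq_fderiv, ← hg]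
        ring
    _ = -(r + 1) * ∫ x, |g x| ^ r * (f ⊙ ∂_{v} g) x ∂μ := by
        rw [hparts, neg_mul, ← integral_const_mul]
        simp only [hfderiv]

theorem eLpNorm_lineDeriv_rpow_le (f : 𝓢(E, ℝ)) (v : E) {r : ℝ} (hr : 0 < r) :
    eLpNorm (∂_{v} f : 𝓢(E, ℝ)) (ENNReal.ofReal (r + 2)) μ ^ (r + 2) ≤
      ENNReal.ofReal (r + 1) *
        eLpNorm (fun x => |∂_{v} f x| ^ r * (f ⊙ ∂_{v} (∂_{v} f)) x) 1 μ := by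
  set G := fun x => |∂_{v} f x| ^ r * (f ⊙ ∂_{v} (∂_{v} f)) x
  have hint : Integrable (fun x => ‖∂_{v} f x‖ ^ (r + 2)) μ := by
    have hnorm := ((∂_{v} f).memLp (ENNReal.ofReal (r + 2)) μ).integrable_norm_rpow
      (by simp; linarith) ENNReal.ofReal_ne_top
    rwa [ENNReal.toReal_ofReal (by positivity)] at hnorm
  calc eLpNorm (∂_{v} f : 𝓢(E, ℝ)) (ENNReal.ofReal (r + 2)) μ ^ (r + 2)
      = eLpNorm (fun x => ‖∂_{v} f x‖ ^ (r + 2)) 1 μ := by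
        rw [eLpNorm_norm_rpow _ (by positivity), one_mul]
    _ = ‖∫ x, |∂_{v} f x| ^ (r + 2) ∂μ‖ₑ := by
        rw [eLpNorm_one_eq_lintegral_enorm, ← ofReal_integral_norm_eq_lintegral_enorm hint,
          Real.enorm_of_nonneg (integral_nonneg fun x => by positivity)]
        simp [Real.abs_rpow_of_nonneg]
    _ = ENNReal.ofReal (r + 1) * ‖∫ x, G x ∂μ‖ₑ := by
        rw [integral_abs_lineDeriv_rpow f v hr, enorm_mul, enorm_neg,
          Real.enorm_of_nonneg (by positivity)]
    _ ≤ ENNReal.ofReal (r + 1) * eLpNorm G 1 μ := by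
        rw [eLpNorm_one_eq_lintegral_enorm]
        gcongr
        exact enorm_integral_le_lintegral_enorm G

-- Gagliardo–Nirenberg: integrate by parts, apply Hölder, then divide by `‖∂ᵥ f‖_q ^ (q - 2)`.
theorem eLpNorm_lineDeriv_sq_le (f : 𝓢(E, ℝ)) (v : E) {q p₁ p₂ : ℝ≥0∞} (hq : 2 < q) (hq' : q ≠ ⊤)
    [p₁.HolderTriple p₂ (q / 2)] :
    eLpNorm (∂_{v} f : 𝓢(E, ℝ)) q μ ^ 2 ≤
      (q - 1) * (eLpNorm f p₁ μ * eLpNorm (∂_{v} (∂_{v} f) : 𝓢(E, ℝ)) p₂ μ) := by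
  obtain ⟨r, hr, rfl⟩ : ∃ r : ℝ, 0 < r ∧ q = ENNReal.ofReal (r + 2) := by
    refine ⟨q.toReal - 2, ?_, by simp [ENNReal.ofReal_toReal hq']⟩
    simpa using ENNReal.toReal_strict_mono hq' hq
  set X := eLpNorm (∂_{v} f : 𝓢(E, ℝ)) (ENNReal.ofReal (r + 2)) μ
  have hXtop : X ≠ ⊤ := ((∂_{v} f).eLpNorm_lt_top _ μ).ne
  rcases eq_or_ne X 0 with hX | hX
  · simp [hX]
  have hsub : ENNReal.ofReal (r + 2) - 1 = ENNReal.ofReal (r + 1) := by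
    rw [← ENNReal.ofReal_one, ← ENNReal.ofReal_sub _ zero_le_one]
    ring_nf
  rw [hsub, ← ENNReal.mul_le_mul_iff_right (a := X ^ r) (by simp [hX, hXtop])
    (ENNReal.rpow_ne_top_of_nonneg hr.le hXtop)]
  calc X ^ r * X ^ 2 = X ^ (r + 2) := by
        rw [ENNReal.rpow_add _ _ hX hXtop, ENNReal.rpow_two]
    _ ≤ ENNReal.ofReal (r + 1) *
        eLpNorm (fun x => |∂_{v} f x| ^ r * (f ⊙ ∂_{v} (∂_{v} f)) x) 1 μ :=
      eLpNorm_lineDeriv_rpow_le f v hr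
    _ ≤ ENNReal.ofReal (r + 1) * (X ^ r * (eLpNorm f p₁ μ *
        eLpNorm (∂_{v} (∂_{v} f) : 𝓢(E, ℝ)) p₂ μ)) := by
      gcongr
      exact (eLpNorm_abs_rpow_mul_le (∂_{v} f).continuous.aestronglyMeasurable
        (f ⊙ ∂_{v} (∂_{v} f)).continuous.aestronglyMeasurable hr).trans
        (by gcongr; exact eLpNorm_schwartzMul_le _ _)
    _ = X ^ r * _ := by ring

end GagliardoNirenberg

theorem holderTriple_div (a b : ℝ≥0∞) {c : ℝ≥0∞} (hc : c ≠ 0) (hc' : c ≠ ⊤) :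
    (c / a).HolderTriple (c / b) (c / (a + b)) := by
  constructor
  simp only [ENNReal.inv_div (.inr hc') (.inr hc), ENNReal.add_div]

section HomSobolev

variable {E κ ι : Type*} [NormedAddCommGroup E] [NormedSpace ℝ E] [MeasurableSpace E]
  {μ : Measure E}

/-- The homogeneous Sobolev norm `max_c ‖∇ⁿ F_c‖_{Lᵖ}` of a family of Schwartz functions, built from
the derivatives along the directions `v` only; it lives in `ℝ≥0∞` so that it is monotone without
side conditions. -/
noncomputable def homSobolevNorm (v : κ → E) (F : ι → 𝓢(E, ℝ)) (n : ℕ) (p : ℝ≥0∞)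
    (μ : Measure E) : ℝ≥0∞ :=
  ⨆ (c : ι) (w : Fin n → κ), eLpNorm (∂^{v ∘ w} (F c) : 𝓢(E, ℝ)) p μ

theorem eLpNorm_le_homSobolevNorm (v : κ → E) (F : ι → 𝓢(E, ℝ)) (c : ι) {n : ℕ} (w : Fin n → κ)
    (p : ℝ≥0∞) : eLpNorm (∂^{v ∘ w} (F c) : 𝓢(E, ℝ)) p μ ≤ homSobolevNorm v F n p μ :=
  le_iSup₂ (f := fun c (w : Fin n → κ) => eLpNorm (∂^{v ∘ w} (F c) : 𝓢(E, ℝ)) p μ) c w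

variable [BorelSpace E]

theorem homSobolevNorm_ne_top [μ.HasTemperateGrowth] [Finite κ]
    [Finite ι] (v : κ → E) (F : ι → 𝓢(E, ℝ)) (n : ℕ) (p : ℝ≥0∞) :
    homSobolevNorm v F n p μ ≠ ⊤ := by
  cases nonempty_fintype κ
  cases nonempty_fintype ι
  simp only [homSobolevNorm, ← Finset.sup_univ_eq_iSup, ← lt_top_iff_ne_top]
  exact (Finset.sup_lt_iff ENNReal.zero_lt_top).2 fun c _ =>
    (Finset.sup_lt_iff ENNReal.zero_lt_top).2 fun w _ => SchwartzMap.eLpNorm_lt_top _ p μ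

variable [FiniteDimensional ℝ E] [μ.IsAddHaarMeasure]

theorem homSobolevNorm_sq_le (v : κ → E) (F : ι → 𝓢(E, ℝ)) (n : ℕ) {q p₁ p₂ : ℝ≥0∞}
    (hq : 2 < q) (hq' : q ≠ ⊤) [p₁.HolderTriple p₂ (q / 2)] :
    homSobolevNorm v F (n + 1) q μ ^ 2 ≤
      (q - 1) * (homSobolevNorm v F n p₁ μ * homSobolevNorm v F (n + 2) p₂ μ) := by
  rw [← ENNReal.rpow_two, ← ENNReal.le_rpow_inv_iff two_pos]
  refine iSup₂_le fun c w => ?_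
  rw [ENNReal.le_rpow_inv_iff two_pos, ENNReal.rpow_two]
  refine (eLpNorm_lineDeriv_sq_le (∂^{v ∘ Fin.tail w} (F c)) (v (w 0)) hq hq'
    (p₁ := p₁) (p₂ := p₂)).trans ?_
  gcongr
  · exact eLpNorm_le_homSobolevNorm v F c (Fin.tail w) p₁
  · exact eLpNorm_le_homSobolevNorm v F c (Fin.cons (w 0) w : Fin (n + 2) → κ) p₂

-- At `k = 0` the exponent `2 * n / k` is `⊤`, the `L^∞` endpoint.
theorem homSobolevNorm_mul_le [Finite κ] [Finite ι] (v : κ → E) (F : ι → 𝓢(E, ℝ)) {k l n : ℕ}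
    (hkl : k + l = n) (hn : n ≠ 0) :
    homSobolevNorm v F k (2 * n / k) μ * homSobolevNorm v F l (2 * n / l) μ ≤
      (2 * n) ^ (k * l) * (homSobolevNorm v F 0 ⊤ μ * homSobolevNorm v F n 2 μ) := by
  have hn' : (n : ℝ≥0∞) ≠ 0 := by exact_mod_cast hn
  have hsq (j : ℕ) (hj : j + 2 ≤ n) : homSobolevNorm v F (j + 1) (2 * n / (j + 1 : ℕ)) μ ^ 2 ≤
      2 * n * (homSobolevNorm v F j (2 * n / j) μ *
        homSobolevNorm v F (j + 2) (2 * n / (j + 2 : ℕ)) μ) := by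
    have hexp : (2 * n / (j + 1 : ℕ) / 2 : ℝ≥0∞) = 2 * n / (j + (j + 2 : ℕ)) := by
      rw [div_eq_mul_inv, div_eq_mul_inv, mul_assoc,
        ← ENNReal.mul_inv (.inl (by simp)) (.inl (by simp)), ← div_eq_mul_inv]
      push_cast
      ring_nf
    have : (2 * n / j : ℝ≥0∞).HolderTriple (2 * n / (j + 2 : ℕ)) (2 * n / (j + 1 : ℕ) / 2) :=
      hexp ▸ holderTriple_div _ _ (by simpa using hn) (by finiteness)
    have hq : (2 : ℝ≥0∞) < 2 * n / (j + 1 : ℕ) := by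
      rw [ENNReal.lt_div_iff_mul_lt (by simp) (by simp)]
      exact_mod_cast (by omega : 2 * (j + 1) < 2 * n)
    refine (homSobolevNorm_sq_le v F j (p₁ := 2 * n / j) (p₂ := 2 * n / (j + 2 : ℕ)) hq
      (by finiteness)).trans ?_
    gcongr
    refine tsub_le_self.trans (ENNReal.div_le_of_le_mul ?_)
    exact_mod_cast (by nlinarith : 2 * n ≤ 2 * n * (j + 1))
  have hlog := mul_le_pow_mul_of_sq_le (C := 2 * (n : ℝ≥0))
    (A := fun j => (homSobolevNorm v F j (2 * n / j) μ).toNNReal) (fun _ => zero_le) zero_le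
    (fun j hj => ?_) hkl
  · rw [← ENNReal.coe_le_coe] at hlog
    simpa [hn', homSobolevNorm_ne_top, ENNReal.mul_div_cancel_right, ENNReal.div_zero] using hlog
  · rw [← ENNReal.coe_le_coe]
    simpa [homSobolevNorm_ne_top] using hsq j hj

theorem eLpNorm_iteratedLineDeriv_mul_le [Finite κ] [Finite ι] (v : κ → E) (F : ι → 𝓢(E, ℝ))
    (c d : ι) {k l : ℕ} (w : Fin k → κ) (w' : Fin l → κ) :
    eLpNorm (∂^{v ∘ w} (F c) ⊙ ∂^{v ∘ w'} (F d)) 2 μ ≤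
      (2 * (k + l : ℕ)) ^ (k * l) *
        (homSobolevNorm v F 0 ⊤ μ * homSobolevNorm v F (k + l) 2 μ) := by
  obtain hn | hn := eq_or_ne (k + l) 0
  · obtain ⟨rfl, rfl⟩ := Nat.add_eq_zero_iff.1 hn
    simpa using (eLpNorm_schwartzMul_le _ _).trans (mul_le_mul'
      (eLpNorm_le_homSobolevNorm v F c w ⊤) (eLpNorm_le_homSobolevNorm v F d w' 2))
  have hn' : (2 * (k + l : ℕ) : ℝ≥0∞) ≠ 0 := by simpa using hn
  have hexp : (2 * (k + l : ℕ) / (k + l) : ℝ≥0∞) = 2 := by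
    rw [← Nat.cast_add, ENNReal.mul_div_cancel_right (by exact_mod_cast hn) (by simp)]
  have : (2 * (k + l : ℕ) / k : ℝ≥0∞).HolderTriple (2 * (k + l : ℕ) / l) 2 := by
    simpa only [hexp] using holderTriple_div k l hn' (by finiteness)
  calc eLpNorm (∂^{v ∘ w} (F c) ⊙ ∂^{v ∘ w'} (F d)) 2 μ
      ≤ homSobolevNorm v F k (2 * (k + l : ℕ) / k) μ *
          homSobolevNorm v F l (2 * (k + l : ℕ) / l) μ :=
        (eLpNorm_schwartzMul_le _ _).trans (mul_le_mul' (eLpNorm_le_homSobolevNorm v F c w _)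
          (eLpNorm_le_homSobolevNorm v F d w' _))
    _ ≤ _ := homSobolevNorm_mul_le v F rfl hn

end HomSobolev

section QuadraticOps

variable {E κ ι : Type*} [NormedAddCommGroup E] [NormedSpace ℝ E]

/-- The bilinear differential expressions `∑ ∂^w F_c · ∂^{w'} F_d` in a family `F` of Schwartz
functions, with derivatives along the directions `v` of total order `n` in each term. -/
noncomputable def quadraticOps (ι : Type*) (v : κ → E) (n : ℕ) :
    AddSubmonoid ((ι → 𝓢(E, ℝ)) → 𝓢(E, ℝ)) :=
  .closure {Φ | ∃ (c d : ι) (k l : ℕ) (w : Fin k → κ) (w' : Fin l → κ), k + l = n ∧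
    Φ = fun F => ∂^{v ∘ w} (F c) ⊙ ∂^{v ∘ w'} (F d)}

theorem schwartzMul_mem_quadraticOps (v : κ → E) (c d : ι) {k l n : ℕ} (w : Fin k → κ)
    (w' : Fin l → κ) (hn : k + l = n) :
    (fun F => ∂^{v ∘ w} (F c) ⊙ ∂^{v ∘ w'} (F d)) ∈ quadraticOps ι v n :=
  AddSubmonoid.subset_closure ⟨c, d, k, l, w, w', hn, rfl⟩

theorem lineDerivOp_mem_quadraticOps {v : κ → E} {n : ℕ} {Φ : (ι → 𝓢(E, ℝ)) → 𝓢(E, ℝ)}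
    (hΦ : Φ ∈ quadraticOps ι v n) (i : κ) :
    (fun F => ∂_{v i} (Φ F)) ∈ quadraticOps ι v (n + 1) := by
  induction hΦ using AddSubmonoid.closure_induction with
  | mem Φ hΦ =>
    obtain ⟨c, d, k, l, w, w', rfl, rfl⟩ := hΦ
    simp only [lineDerivOp_schwartzMul]
    exact add_mem
      (schwartzMul_mem_quadraticOps v c d (Fin.cons i w : Fin (k + 1) → κ) w' (by omega))
      (schwartzMul_mem_quadraticOps v c d w (Fin.cons i w' : Fin (l + 1) → κ) (by omega))
  | zero => simpa only [Pi.zero_apply, LineDeriv.lineDerivOp_zero] using! zero_mem _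
  | add Φ Ψ _ _ hΦ hΨ =>
    simpa only [Pi.add_apply, LineDeriv.lineDerivOp_add] using! add_mem hΦ hΨ

variable [FiniteDimensional ℝ E] [MeasurableSpace E] [BorelSpace E] {μ : Measure E}
  [μ.IsAddHaarMeasure]

theorem exists_eLpNorm_quadraticOps_le [Finite κ] [Finite ι] {v : κ → E} {n : ℕ}
    {Φ : (ι → 𝓢(E, ℝ)) → 𝓢(E, ℝ)} (hΦ : Φ ∈ quadraticOps ι v n) :
    ∃ K : ℝ≥0, ∀ F, eLpNorm (Φ F) 2 μ ≤
      K * (homSobolevNorm v F 0 ⊤ μ * homSobolevNorm v F n 2 μ) := by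
  induction hΦ using AddSubmonoid.closure_induction with
  | mem Φ hΦ =>
    obtain ⟨c, d, k, l, w, w', rfl, rfl⟩ := hΦ
    exact ⟨(2 * (k + l : ℕ)) ^ (k * l), fun F => by
      simpa using eLpNorm_iteratedLineDeriv_mul_le v F c d w w'⟩
  | zero => exact ⟨0, fun F => by simp⟩
  | add Φ Ψ _ _ hΦ hΨ =>
    obtain ⟨K, hK⟩ := hΦ
    obtain ⟨L, hL⟩ := hΨ
    refine ⟨K + L, fun F => ?_⟩
    calc eLpNorm (Φ F + Ψ F : 𝓢(E, ℝ)) 2 μ ≤ eLpNorm (Φ F) 2 μ + eLpNorm (Ψ F) 2 μ :=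
          eLpNorm_add_le (Φ F).continuous.aestronglyMeasurable
            (Ψ F).continuous.aestronglyMeasurable one_le_two
      _ ≤ _ := (add_le_add (hK F) (hL F)).trans_eq (by rw [ENNReal.coe_add, add_mul])

end QuadraticOps

section Transport

variable {E κ ι : Type*} [NormedAddCommGroup E] [NormedSpace ℝ E]

/-- The first derivatives, along the directions `v`, of a family of Schwartz functions. -/
noncomputable def gradFamily (v : κ → E) (u : ι → 𝓢(E, ℝ)) (p : κ × ι) : 𝓢(E, ℝ) :=
  ∂_{v p.1} (u p.2)

variable [Fintype κ]

/-- The transport term `u · ∇f`, for the vector field with components `u j` along `v j`. -/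
noncomputable def transport (v : κ → E) (u : κ → 𝓢(E, ℝ)) (f : 𝓢(E, ℝ)) : 𝓢(E, ℝ) :=
  ∑ j, u j ⊙ ∂_{v j} f

theorem transport_apply (v : κ → E) (u : κ → 𝓢(E, ℝ)) (f : 𝓢(E, ℝ)) (x : E) :
    transport v u f x = ∑ j, u j x * ∂_{v j} f x := by
  simp [transport]

theorem lineDerivOp_transport (v : κ → E) (u : κ → 𝓢(E, ℝ)) (f : 𝓢(E, ℝ)) (a : E) :
    ∂_{a} (transport v u f) =
      transport v u (∂_{a} f) + transport v (fun j => ∂_{a} (u j)) f := by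
  simp only [transport, LineDeriv.lineDerivOp_sum, lineDerivOp_schwartzMul,
    Finset.sum_add_distrib, lineDerivOp_comm f a]
  exact add_comm _ _

theorem exists_transport_lineDerivOp_eq (v : κ → E) (a i : κ) {n : ℕ} (w : Fin n → κ) :
    ∃ Ψ ∈ quadraticOps (κ × κ) v n, ∀ u : κ → 𝓢(E, ℝ),
      transport v (fun j => ∂_{v a} (u j)) (∂^{v ∘ w} (u i)) = Ψ (gradFamily v u) := by
  refine ⟨∑ j, fun F => F (a, j) ⊙ ∂^{v ∘ w} (F (j, i)), sum_mem fun j _ =>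
    schwartzMul_mem_quadraticOps v (a, j) (j, i) ![] w (zero_add n), fun u => ?_⟩
  simp only [transport, gradFamily, iteratedLineDerivOp_lineDerivOp_comm, Finset.sum_apply]

theorem exists_iteratedLineDerivOp_transport_eq (v : κ → E) {n : ℕ} (w : Fin (n + 1) → κ) (i : κ) :
    ∃ Φ ∈ quadraticOps (κ × κ) v n, ∀ u : κ → 𝓢(E, ℝ),
      ∂^{v ∘ w} (transport v u (u i)) =
        transport v u (∂^{v ∘ w} (u i)) + Φ (gradFamily v u) := by
  induction n with
  | zero =>
    obtain ⟨Ψ, hΨ, hΨu⟩ := exists_transport_lineDerivOp_eq v (w 0) i (Fin.tail w)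
    refine ⟨Ψ, hΨ, fun u => ?_⟩
    rw [← hΨu]
    exact lineDerivOp_transport v u (u i) (v (w 0))
  | succ n ih =>
    obtain ⟨Ψ, hΨ, hΨu⟩ := exists_transport_lineDerivOp_eq v (w 0) i (Fin.tail w)
    obtain ⟨Φ, hΦ, hΦu⟩ := ih (Fin.tail w)
    refine ⟨Ψ + fun F => ∂_{v (w 0)} (Φ F),
      add_mem hΨ (lineDerivOp_mem_quadraticOps hΦ (w 0)), fun u => ?_⟩
    calc ∂^{v ∘ w} (transport v u (u i))
        = ∂_{v (w 0)} (∂^{v ∘ Fin.tail w} (transport v u (u i))) := rfl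
      _ = transport v u (∂_{v (w 0)} (∂^{v ∘ Fin.tail w} (u i))) + Ψ (gradFamily v u) +
          ∂_{v (w 0)} (Φ (gradFamily v u)) := by
        rw [hΦu, LineDeriv.lineDerivOp_add, lineDerivOp_transport, hΨu]
      _ = transport v u (∂^{v ∘ w} (u i)) +
          (Ψ + fun F => ∂_{v (w 0)} (Φ F)) (gradFamily v u) := add_assoc _ _ _

theorem sum_lineDerivOp_schwartzMul_eq_transport {v : κ → E} {u : κ → 𝓢(E, ℝ)}
    (hdiv : ∑ j, ∂_{v j} (u j) = 0) (f : 𝓢(E, ℝ)) :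
    ∑ j, ∂_{v j} (u j ⊙ f) = transport v u f := by
  ext x
  have hdivx : ∑ j, ∂_{v j} (u j) x = 0 := by simpa using DFunLike.congr_fun hdiv x
  simp [lineDerivOp_schwartzMul, transport, Finset.sum_add_distrib, ← Finset.sum_mul, hdivx]

variable [FiniteDimensional ℝ E] [MeasurableSpace E] [BorelSpace E] {μ : Measure E}
  [μ.IsAddHaarMeasure]

theorem integral_transport_mul_self {v : κ → E} {u : κ → 𝓢(E, ℝ)}
    (hdiv : ∑ j, ∂_{v j} (u j) = 0) (f : 𝓢(E, ℝ)) :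
    ∫ x, transport v u f x * f x ∂μ = 0 := by
  refine self_eq_neg.1 ?_
  calc ∫ x, transport v u f x * f x ∂μ = ∫ x, ∑ j, (u j ⊙ f) x * ∂_{v j} f x ∂μ := by
        simp only [transport_apply, Finset.sum_mul, schwartzMul_apply, mul_right_comm]
    _ = ∑ j, ∫ x, (u j ⊙ f) x * ∂_{v j} f x ∂μ :=
        integral_sum_mul_eq_sum_integral (fun j => u j ⊙ f) fun j => ∂_{v j} f
    _ = -∑ j, ∫ x, ∂_{v j} (u j ⊙ f) x * f x ∂μ := by
        simp only [SchwartzMap.integral_mul_lineDerivOp_right_eq_neg_left, Finset.sum_neg_distrib]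
    _ = -∫ x, ∑ j, ∂_{v j} (u j ⊙ f) x * f x ∂μ := by
        rw [integral_sum_mul_eq_sum_integral (fun j => ∂_{v j} (u j ⊙ f)) fun _ => f]
    _ = -∫ x, transport v u f x * f x ∂μ := by
        simp only [← sum_lineDerivOp_schwartzMul_eq_transport hdiv f, Finset.sum_mul, sum_apply]

theorem exists_enorm_integral_iteratedLineDeriv_transport_le (v : κ → E) {n : ℕ}
    (w : Fin (n + 1) → κ) (i : κ) :
    ∃ K : ℝ≥0, ∀ u : κ → 𝓢(E, ℝ), ∑ j, ∂_{v j} (u j) = 0 →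
      ‖∫ x, ∂^{v ∘ w} (transport v u (u i)) x * ∂^{v ∘ w} (u i) x ∂μ‖ₑ ≤
        K * homSobolevNorm v (gradFamily v u) 0 ⊤ μ *
          homSobolevNorm v (gradFamily v u) n 2 μ ^ 2 := by
  obtain ⟨Φ, hΦ, hcomm⟩ := exists_iteratedLineDerivOp_transport_eq v w i
  obtain ⟨K, hK⟩ := exists_eLpNorm_quadraticOps_le (μ := μ) hΦ
  refine ⟨K, fun u hdiv => ?_⟩
  set F := gradFamily v u
  set g := ∂^{v ∘ w} (u i)
  have hg : eLpNorm g 2 μ ≤ homSobolevNorm v F n 2 μ := by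
    rw [show g = ∂^{v ∘ Fin.init w} (F (w (Fin.last n), i)) from
      LineDeriv.iteratedLineDerivOp_succ_right ..]
    exact eLpNorm_le_homSobolevNorm v F _ _ 2
  have hint : ∫ x, ∂^{v ∘ w} (transport v u (u i)) x * g x ∂μ = ∫ x, (Φ F ⊙ g) x ∂μ :=
    calc ∫ x, ∂^{v ∘ w} (transport v u (u i)) x * g x ∂μ
        = ∫ x, (transport v u g ⊙ g) x + (Φ F ⊙ g) x ∂μ := by
          simp only [hcomm u, add_apply, add_mul, schwartzMul_apply, F, g]
      _ = ∫ x, transport v u g x * g x ∂μ + ∫ x, (Φ F ⊙ g) x ∂μ :=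
          integral_add (transport v u g ⊙ g).integrable (Φ F ⊙ g).integrable
      _ = ∫ x, (Φ F ⊙ g) x ∂μ := by rw [integral_transport_mul_self hdiv, zero_add]
  calc ‖∫ x, ∂^{v ∘ w} (transport v u (u i)) x * g x ∂μ‖ₑ
      ≤ eLpNorm (Φ F) 2 μ * eLpNorm g 2 μ := hint ▸ enorm_integral_schwartzMul_le _ _
    _ ≤ _ := mul_le_mul' (hK F) hg
    _ = _ := by ring

end Transport

theorem memLp_two_iteratedFDeriv {E F : Type*} [NormedAddCommGroup E] [NormedSpace ℝ E]
    [NormedAddCommGroup F] [NormedSpace ℝ F] [MeasurableSpace E] [BorelSpace E]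
    [SecondCountableTopology E] {μ : Measure E} [μ.HasTemperateGrowth] (f : 𝓢(E, F)) (n : ℕ) :
    MemLp (iteratedFDeriv ℝ n f) 2 μ := by
  have hcont : Continuous (iteratedFDeriv ℝ n f) := (f.smooth n).continuous_iteratedFDeriv'
  obtain ⟨C, -, hC⟩ := f.decay 0 n
  have hint := f.integrable_pow_mul_iteratedFDeriv μ 0 n
  simp only [pow_zero, one_mul] at hC hint
  refine (memLp_two_iff_integrable_sq_norm hcont.aestronglyMeasurable).2 ?_
  simpa only [sq] using
    hint.mul_bdd (c := C) hint.aestronglyMeasurable (.of_forall fun x => by simpa using hC x)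

theorem eLpNorm_iteratedLineDerivOp_le {E F : Type*} [NormedAddCommGroup E] [NormedSpace ℝ E]
    [NormedAddCommGroup F] [NormedSpace ℝ F] [MeasurableSpace E] {μ : Measure E} (f : 𝓢(E, F))
    {n : ℕ} {m : Fin n → E} (hm : ∀ i, ‖m i‖ ≤ 1) (p : ℝ≥0∞) :
    eLpNorm (∂^{m} f : 𝓢(E, F)) p μ ≤ eLpNorm (iteratedFDeriv ℝ n f) p μ := by
  refine eLpNorm_mono fun x => ?_
  rw [SchwartzMap.iteratedLineDerivOp_eq_iteratedFDeriv]
  exact (iteratedFDeriv ℝ n f x).unit_le_opNorm ((pi_norm_le_iff_of_nonneg zero_le_one).2 hm)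

section VectorFields

/-- The `i`-th component of a Schwartz vector field. -/
noncomputable def schwartzComponent {E ι : Type*} [NormedAddCommGroup E] [NormedSpace ℝ E]
    [Fintype ι] (u : 𝓢(E, ι → ℝ)) (i : ι) : 𝓢(E, ℝ) :=
  SchwartzMap.postcompCLM (ContinuousLinearMap.proj (R := ℝ) (φ := fun _ : ι => ℝ) i) u

theorem coe_schwartzComponent {E ι : Type*} [NormedAddCommGroup E] [NormedSpace ℝ E]
    [Fintype ι] (u : 𝓢(E, ι → ℝ)) (i : ι) : ⇑(schwartzComponent u i) = fun y => u y i := rfl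

/-- The standard basis of `ℝ³`, the directions in which `pd` differentiates. -/
noncomputable def stdDir (i : Fin 3) : Fin 3 → ℝ := Pi.single i 1

theorem norm_stdDir (i : Fin 3) : ‖stdDir i‖ = 1 := by
  rw [stdDir, Pi.norm_single, norm_one]

theorem pd_coe (i : Fin 3) (f : 𝓢(Fin 3 → ℝ, ℝ)) :
    pd i f = (∂_{stdDir i} f : 𝓢(Fin 3 → ℝ, ℝ)) :=
  funext fun x => (SchwartzMap.lineDerivOp_apply_eq_fderiv (stdDir i) f x).symm

theorem exists_pd_iterate_coe (i : Fin 3) (a : ℕ) {n : ℕ} (w : Fin n → Fin 3) :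
    ∃ w' : Fin (n + a) → Fin 3, ∀ f : 𝓢(Fin 3 → ℝ, ℝ),
      (pd i)^[a] (∂^{stdDir ∘ w} f : 𝓢(Fin 3 → ℝ, ℝ)) =
        (∂^{stdDir ∘ w'} f : 𝓢(Fin 3 → ℝ, ℝ)) := by
  induction a with
  | zero => exact ⟨w, fun f => rfl⟩
  | succ a ih =>
    obtain ⟨w', hw'⟩ := ih
    refine ⟨Fin.cons i w', fun f => ?_⟩
    rw [Function.iterate_succ_apply', hw', pd_coe]
    rfl

theorem exists_Dmulti_coe {a b c n : ℕ} (hn : a + b + c = n) :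
    ∃ w : Fin n → Fin 3, ∀ f : 𝓢(Fin 3 → ℝ, ℝ),
      Dmulti a b c f = (∂^{stdDir ∘ w} f : 𝓢(Fin 3 → ℝ, ℝ)) := by
  obtain rfl : n = 0 + c + b + a := by omega
  obtain ⟨w₂, hw₂⟩ := exists_pd_iterate_coe 2 c ![]
  obtain ⟨w₁, hw₁⟩ := exists_pd_iterate_coe 1 b w₂
  obtain ⟨w₀, hw₀⟩ := exists_pd_iterate_coe 0 a w₁
  exact ⟨w₀, fun f => by rw [← hw₀, ← hw₁, ← hw₂]; rfl⟩

theorem coe_transport_schwartzComponent (u : 𝓢(Fin 3 → ℝ, Fin 3 → ℝ)) (f : 𝓢(Fin 3 → ℝ, ℝ)) :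
    ⇑(transport stdDir (schwartzComponent u) f) = fun y => ∑ j, u y j * pd j f y := by
  ext y
  simp only [transport_apply, pd_coe, coe_schwartzComponent]

theorem sum_lineDerivOp_schwartzComponent_eq_zero {u : 𝓢(Fin 3 → ℝ, Fin 3 → ℝ)}
    (hdiv : ∀ x, ∑ i, pd i (fun y => u y i) x = 0) :
    ∑ j, ∂_{stdDir j} (schwartzComponent u j) = 0 := by
  ext x
  simpa only [sum_apply, ← pd_coe, coe_schwartzComponent] using! hdiv x

theorem sobSq_nonneg (m : ℕ) (f : (Fin 3 → ℝ) → ℝ) : 0 ≤ sobSq m f :=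
  Finset.sum_nonneg fun _ _ => integral_nonneg fun _ => by positivity

theorem eLpNorm_iteratedFDeriv_le_sobSq (f : 𝓢(Fin 3 → ℝ, ℝ)) {n m : ℕ} (hn : n ≤ m) :
    eLpNorm (iteratedFDeriv ℝ n f) 2 volume ≤ ENNReal.ofReal √(sobSq m f) := by
  rw [(memLp_two_iteratedFDeriv f n).eLpNorm_eq_integral_rpow_norm two_ne_zero
    ENNReal.ofNat_ne_top]
  simp only [ENNReal.toReal_ofNat, Real.rpow_two]
  rw [← one_div, ← Real.sqrt_eq_rpow]
  exact ENNReal.ofReal_le_ofReal (Real.sqrt_le_sqrt (Finset.single_le_sum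
    (f := fun k => ∫ x : Fin 3 → ℝ, ‖iteratedFDeriv ℝ k f x‖ ^ 2)
    (fun k _ => integral_nonneg fun x => by positivity) (Finset.mem_range_succ_iff.2 hn)))

theorem sqrt_sobSq_pd_le_gradSob (m : ℕ) (u : (Fin 3 → ℝ) → Fin 3 → ℝ) (i j : Fin 3) :
    √(sobSq (m - 1) (pd j fun y => u y i)) ≤ gradSob m u :=
  Real.sqrt_le_sqrt <|
    (Finset.single_le_sum (f := fun j => sobSq (m - 1) (pd j fun y => u y i))
      (fun _ _ => sobSq_nonneg _ _) (Finset.mem_univ j)).trans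
    (Finset.single_le_sum (f := fun i => ∑ j, sobSq (m - 1) (pd j fun y => u y i))
      (fun _ _ => Finset.sum_nonneg fun _ _ => sobSq_nonneg _ _) (Finset.mem_univ i))

theorem homSobolevNorm_gradFamily_two_le (u : 𝓢(Fin 3 → ℝ, Fin 3 → ℝ)) {n m : ℕ}
    (hn : n ≤ m - 1) :
    homSobolevNorm stdDir (gradFamily stdDir (schwartzComponent u)) n 2 volume ≤
      ENNReal.ofReal (gradSob m fun y => u y) := by
  refine iSup₂_le fun c w => ?_
  calc eLpNorm (∂^{stdDir ∘ w} (gradFamily stdDir (schwartzComponent u) c) :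
        𝓢(Fin 3 → ℝ, ℝ)) 2 volume
      ≤ eLpNorm (iteratedFDeriv ℝ n (gradFamily stdDir (schwartzComponent u) c)) 2 volume :=
        eLpNorm_iteratedLineDerivOp_le _ (fun i => (norm_stdDir (w i)).le) 2
    _ ≤ ENNReal.ofReal √(sobSq (m - 1) (gradFamily stdDir (schwartzComponent u) c)) :=
        eLpNorm_iteratedFDeriv_le_sobSq _ hn
    _ ≤ ENNReal.ofReal (gradSob m fun y => u y) := by
        rw [gradFamily, ← pd_coe, coe_schwartzComponent]
        exact ENNReal.ofReal_le_ofReal (sqrt_sobSq_pd_le_gradSob m _ c.2 c.1)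

theorem homSobolevNorm_gradFamily_top_le (u : 𝓢(Fin 3 → ℝ, Fin 3 → ℝ)) :
    homSobolevNorm stdDir (gradFamily stdDir (schwartzComponent u)) 0 ⊤ volume ≤
      ENNReal.ofReal (gradLinfVec fun y => u y) := by
  have hfin : eLpNorm (fun x => ‖fderiv ℝ u x‖) ⊤ volume ≠ ⊤ := by
    rw [eLpNorm_norm]
    exact ((SchwartzMap.fderivCLM ℝ (Fin 3 → ℝ) (Fin 3 → ℝ) u).eLpNorm_lt_top ⊤ volume).ne
  rw [gradLinfVec, ENNReal.ofReal_toReal hfin]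
  refine iSup₂_le fun c _ => eLpNorm_mono fun x => ?_
  have hderiv : ∂_{stdDir c.1} (schwartzComponent u c.2) x = fderiv ℝ u x (stdDir c.1) c.2 := by
    rw [SchwartzMap.lineDerivOp_apply_eq_fderiv, coe_schwartzComponent,
      fderiv_apply u.differentiableAt]
    rfl
  calc ‖∂_{stdDir c.1} (schwartzComponent u c.2) x‖ ≤ ‖fderiv ℝ u x (stdDir c.1)‖ :=
        hderiv ▸ norm_le_pi_norm _ _
    _ ≤ ‖‖fderiv ℝ u x‖‖ := by
        simpa [norm_stdDir] using (fderiv ℝ u x).le_opNorm (stdDir c.1)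

theorem integral_transport_Dmulti_mul_self {u : 𝓢(Fin 3 → ℝ, Fin 3 → ℝ)}
    (hdiv : ∀ x, ∑ i, pd i (fun y => u y i) x = 0) (a b c : ℕ) :
    ∫ x : Fin 3 → ℝ, ∑ i, (∑ j, u x j * pd j (Dmulti a b c (fun y => u y i)) x)
      * Dmulti a b c (fun y => u y i) x = 0 := by
  obtain ⟨w, hw⟩ := exists_Dmulti_coe (a := a) (b := b) (c := c) rfl
  let g (i : Fin 3) : 𝓢(Fin 3 → ℝ, ℝ) := ∂^{stdDir ∘ w} (schwartzComponent u i)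
  let T (i : Fin 3) : 𝓢(Fin 3 → ℝ, ℝ) := transport stdDir (schwartzComponent u) (g i)
  have hg (i : Fin 3) : Dmulti a b c (fun y => u y i) = g i := hw (schwartzComponent u i)
  have hT (i : Fin 3) (x : Fin 3 → ℝ) : ∑ j, u x j * pd j (g i) x = T i x :=
    (congrFun (coe_transport_schwartzComponent u (g i)) x).symm
  simp only [hg, hT, integral_sum_mul_eq_sum_integral T g]
  exact Finset.sum_eq_zero fun i _ =>
    integral_transport_mul_self (sum_lineDerivOp_schwartzComponent_eq_zero hdiv) (g i)

theorem exists_abs_integral_iteratedLineDeriv_transport_le {m n : ℕ} (hn : n ≤ m - 1)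
    (w : Fin (n + 1) → Fin 3) (i : Fin 3) :
    ∃ K : ℝ≥0, ∀ u : 𝓢(Fin 3 → ℝ, Fin 3 → ℝ), (∀ x, ∑ i, pd i (fun y => u y i) x = 0) →
      |∫ x, ∂^{stdDir ∘ w} (transport stdDir (schwartzComponent u) (schwartzComponent u i)) x *
        ∂^{stdDir ∘ w} (schwartzComponent u i) x| ≤
        K * gradLinfVec (fun y => u y) * gradSob m (fun y => u y) ^ 2 := by
  obtain ⟨K, hK⟩ :=
    exists_enorm_integral_iteratedLineDeriv_transport_le (μ := volume) stdDir w i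
  refine ⟨K, fun u hdiv => ?_⟩
  have hL : 0 ≤ gradLinfVec fun y => u y := ENNReal.toReal_nonneg
  have hS : 0 ≤ gradSob m fun y => u y := Real.sqrt_nonneg _
  rw [← ENNReal.ofReal_le_ofReal_iff (by positivity), ← Real.enorm_eq_ofReal_abs,
    ENNReal.ofReal_mul (by positivity), ENNReal.ofReal_mul (by positivity),
    ENNReal.ofReal_pow hS, ENNReal.ofReal_coe_nnreal]
  refine (hK _ (sum_lineDerivOp_schwartzComponent_eq_zero hdiv)).trans ?_
  gcongr
  · exact homSobolevNorm_gradFamily_top_le u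
  · exact homSobolevNorm_gradFamily_two_le u hn

theorem exists_abs_integral_Dmulti_transport_le {m a b c : ℕ} (hpos : 0 < a + b + c)
    (hle : a + b + c ≤ m) :
    ∃ K : ℝ≥0, ∀ u : 𝓢(Fin 3 → ℝ, Fin 3 → ℝ), (∀ x, ∑ i, pd i (fun y => u y i) x = 0) →
      |∫ x : Fin 3 → ℝ, ∑ i, Dmulti a b c (fun y => ∑ j, u y j * pd j (fun z => u z i) y) x
        * Dmulti a b c (fun y => u y i) x| ≤
        K * gradLinfVec (fun y => u y) * gradSob m (fun y => u y) ^ 2 := by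
  obtain ⟨n, hn⟩ := Nat.exists_eq_succ_of_ne_zero hpos.ne'
  obtain ⟨w, hw⟩ := exists_Dmulti_coe hn
  choose K hK using
    exists_abs_integral_iteratedLineDeriv_transport_le (by omega : n ≤ m - 1) w
  refine ⟨∑ i, K i, fun u hdiv => ?_⟩
  let g (i : Fin 3) : 𝓢(Fin 3 → ℝ, ℝ) := ∂^{stdDir ∘ w} (schwartzComponent u i)
  let T (i : Fin 3) : 𝓢(Fin 3 → ℝ, ℝ) :=
    ∂^{stdDir ∘ w} (transport stdDir (schwartzComponent u) (schwartzComponent u i))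
  have hg (i : Fin 3) : Dmulti a b c (fun y => u y i) = g i := hw (schwartzComponent u i)
  have hT (i : Fin 3) : Dmulti a b c (fun y => ∑ j, u y j * pd j (fun z => u z i) y) = T i := by
    rw [← hw, coe_transport_schwartzComponent, coe_schwartzComponent]
  simp only [hg, hT, integral_sum_mul_eq_sum_integral T g, NNReal.coe_sum, Finset.sum_mul]
  exact (Finset.abs_sum_le_sum_abs _ _).trans (Finset.sum_le_sum fun i _ => hK i u hdiv)

end VectorFields

theorem transport_cancellation_and_commutator_general (m : ℕ) :
    ∃ C > 0, ∀ u : 𝓢(Fin 3 → ℝ, Fin 3 → ℝ), (∀ x, ∑ i, pd i (fun y => u y i) x = 0) →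
      (∀ a b c : ℕ,
        (∫ x : Fin 3 → ℝ, ∑ i, (∑ j, u x j * pd j (Dmulti a b c (fun y => u y i)) x)
          * Dmulti a b c (fun y => u y i) x) = 0) ∧
      |∑ p ∈ idxSetPos m, ∫ x : Fin 3 → ℝ, ∑ i,
          Dmulti p.1 p.2.1 p.2.2 (fun y => ∑ j, u y j * pd j (fun z => u z i) y) x
            * Dmulti p.1 p.2.1 p.2.2 (fun y => u y i) x| ≤
        C * gradLinfVec (fun y => u y) * gradSob m (fun y => u y) ^ 2 := by
  have hbound (p : ℕ × ℕ × ℕ) (hp : p ∈ idxSetPos m) :=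
    exists_abs_integral_Dmulti_transport_le (Finset.mem_filter.1 hp).2.1
      (Finset.mem_filter.1 hp).2.2
  choose! K hK using hbound
  refine ⟨∑ p ∈ idxSetPos m, (K p : ℝ) + 1, by positivity, fun u hdiv =>
    ⟨integral_transport_Dmulti_mul_self hdiv, ?_⟩⟩
  have hL : 0 ≤ gradLinfVec fun y => u y := ENNReal.toReal_nonneg
  refine (Finset.abs_sum_le_sum_abs _ _).trans
    ((Finset.sum_le_sum fun p hp => hK p hp u hdiv).trans ?_)
  rw [← Finset.sum_mul, ← Finset.sum_mul]
  gcongr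
  exact (lt_add_one _).le

/-- Transport term cancellation and commutator estimate: for Schwartz divergence-free `u`,
`∫ (u·∇ D^α u)·D^α u = 0` for every `|α| ≤ m`, and consequently
`|Σ_{0<|α|≤m} ∫ D^α(u·∇u)·D^α u| ≤ C ‖∇u‖_{L^∞} ‖∇u‖²_{H^{m−1}}`. -/
theorem transport_cancellation_and_commutator (m : ℕ) (hm : 3 ≤ m) :
    ∃ C > 0, ∀ u : SchwartzMap (Fin 3 → ℝ) (Fin 3 → ℝ),
      (∀ x, ∑ i, pd i (fun y => u y i) x = 0) →
      (∀ a b c : ℕ, a + b + c ≤ m →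
        (∫ x : Fin 3 → ℝ, ∑ i,
          (∑ j, u x j * pd j (Dmulti a b c (fun y => u y i)) x)
            * Dmulti a b c (fun y => u y i) x) = 0) ∧
      |∑ p ∈ idxSetPos m,
          ∫ x : Fin 3 → ℝ, ∑ i,
            Dmulti p.1 p.2.1 p.2.2
              (fun y => ∑ j, u y j * pd j (fun z => u z i) y) x
              * Dmulti p.1 p.2.1 p.2.2 (fun y => u y i) x| ≤
        C * gradLinfVec (fun y => u y) * gradSob m (fun y => u y) ^ 2 := by
  obtain ⟨C, hC, hmain⟩ := transport_cancellation_and_commutator_general m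
  exact ⟨C, hC, fun u hdiv => ⟨fun a b c _ => (hmain u hdiv).1 a b c, (hmain u hdiv).2⟩⟩
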